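/- Let A be an n×n matrix, V an n×k matrix with orthonormal columns, θ ∈ C, y a unit vector with (θ, Vy) a Ritz pair, and w := (I - yy*)z a solution of the least squares normal equations. Let τ be the scalar such that s := y + τw minimizes ‖(A - θI)Vs‖²/‖s‖² over span{y, w}. Then ‖(A - θI)Vs‖²/‖s‖² = ‖(A - θI)Vy‖² - τ‖(A - θI)Vw‖². -/

import Mathlib

open Matrix
open scoped ComplexConjugate

/-- Squared Euclidean norm of a complex vector. -/
noncomputable def nsq {k : ℕ} (x : Fin k → ℂ) : ℝ := ∑ i, ‖x i‖ ^ 2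

/-- Standard Hermitian inner product (conjugate-linear in the first argument). -/
noncomputable def cip {k : ℕ} (x y : Fin k → ℂ) : ℂ := ∑ i, conj (x i) * y i

/-- Orthogonal projection `(I - yy*) v`. -/
noncomputable def proj {k : ℕ} (y v : Fin k → ℂ) : Fin k → ℂ := v - cip y v • y

theorem cip_eq_dot {k : ℕ} (x y : Fin k → ℂ) : cip x y = star x ⬝ᵥ y := rfl

theorem nsq_nonneg' {k : ℕ} (x : Fin k → ℂ) : 0 ≤ nsq x :=
  Finset.sum_nonneg (fun i _ => by positivity)

theorem cip_self {k : ℕ} (x : Fin k → ℂ) : cip x x = (nsq x : ℂ) := by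
  unfold cip nsq
  push_cast
  refine Finset.sum_congr rfl (fun i _ => ?_)
  rw [mul_comm, Complex.mul_conj, Complex.normSq_eq_norm_sq]
  push_cast
  rfl

theorem nsq_add_smul {k : ℕ} (x y : Fin k → ℂ) (t : ℝ) :
    nsq (x + (t : ℂ) • y) = nsq x + 2 * t * (cip y x).re + t ^ 2 * nsq y := by
  unfold nsq cip
  rw [Complex.re_sum, Finset.mul_sum, Finset.mul_sum, ← Finset.sum_add_distrib,
    ← Finset.sum_add_distrib]
  refine Finset.sum_congr rfl (fun i _ => ?_)
  simp only [← Complex.normSq_eq_norm_sq, Complex.normSq_apply, Pi.add_apply, Pi.smul_apply,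
    smul_eq_mul, Complex.add_re, Complex.add_im, Complex.mul_re, Complex.mul_im,
    Complex.ofReal_re, Complex.ofReal_im, Complex.conj_re, Complex.conj_im]
  ring

theorem cip_sub_smul {k : ℕ} (x u v : Fin k → ℂ) (c : ℂ) :
    cip x (u - c • v) = cip x u - c * cip x v := by
  simp [cip_eq_dot, dotProduct_sub, dotProduct_smul]

theorem cip_conj {k : ℕ} (x y : Fin k → ℂ) : conj (cip x y) = cip y x := by
  unfold cip
  rw [map_sum]
  refine Finset.sum_congr rfl (fun i _ => ?_)
  simp [mul_comm]

theorem stmt6 {n k : ℕ} (A : Matrix (Fin n) (Fin n) ℂ) (V : Matrix (Fin n) (Fin k) ℂ)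
    (θ : ℂ) (y z : Fin k → ℂ)
    (hV : Vᴴ * V = 1) (hy : nsq y = 1)
    (hRitz : (Vᴴ * ((A - θ • 1) * V)).mulVec y = 0)
    (M : Matrix (Fin k) (Fin k) ℂ)
    (hM : M = Vᴴ * (A - θ • 1)ᴴ * ((A - θ • 1) * V))
    (w : Fin k → ℂ) (hw : w = proj y z)
    (hne : proj y (M.mulVec w) = -(proj y (M.mulVec y)))
    (τ : ℝ) (s : Fin k → ℂ) (hs : s = y + (τ : ℂ) • w)
    (hmin : ∀ a b : ℂ, a • y + b • w ≠ 0 →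
      nsq ((A - θ • 1).mulVec (V.mulVec s)) / nsq s
        ≤ nsq ((A - θ • 1).mulVec (V.mulVec (a • y + b • w))) / nsq (a • y + b • w))
 :
    nsq ((A - θ • 1).mulVec (V.mulVec s)) / nsq s
      = nsq ((A - θ • 1).mulVec (V.mulVec y)) - τ * nsq ((A - θ • 1).mulVec (V.mulVec w)) := by
  have hyy : cip y y = 1 := by rw [cip_self, hy]; simp
  have hyw : cip y w = 0 := by
    rw [hw, proj, cip_sub_smul, hyy]; ring
  have hwy : cip w y = 0 := by rw [← cip_conj, hyw]; simp
  have hadj : ∀ x : Fin k → ℂ, cip w (M.mulVec x) =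
      cip ((A - θ • 1).mulVec (V.mulVec w)) ((A - θ • 1).mulVec (V.mulVec x)) := by
    intro x
    rw [hM, cip_eq_dot, cip_eq_dot, star_mulVec, star_mulVec, ← dotProduct_mulVec,
      ← dotProduct_mulVec]
    simp only [mulVec_mulVec, Matrix.mul_assoc]
  have hproj : ∀ x : Fin k → ℂ, cip w (proj y x) = cip w x := by
    intro x
    rw [proj, cip_sub_smul, hwy]; ring
  have hb : (cip ((A - θ • 1).mulVec (V.mulVec w)) ((A - θ • 1).mulVec (V.mulVec y))).re =
      - nsq ((A - θ • 1).mulVec (V.mulVec w)) := by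
    have h1 := congrArg (cip w) hne
    have h2 : ∀ x : Fin k → ℂ, cip w (-x) = - cip w x := by
      intro x; simp [cip_eq_dot]
    rw [h2, hproj, hproj, hadj, hadj, cip_self] at h1
    rw [eq_comm, neg_eq_iff_eq_neg] at h1
    rw [h1]; simp
  have hN : ∀ t : ℝ, nsq (y + (t : ℂ) • w) = 1 + t ^ 2 * nsq w := by
    intro t
    rw [nsq_add_smul, hwy, hy]; simp
  have hR : ∀ t : ℝ, nsq ((A - θ • 1).mulVec (V.mulVec (y + (t : ℂ) • w))) =
      nsq ((A - θ • 1).mulVec (V.mulVec y)) - 2 * t * nsq ((A - θ • 1).mulVec (V.mulVec w))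
        + t ^ 2 * nsq ((A - θ • 1).mulVec (V.mulVec w)) := by
    intro t
    rw [mulVec_add, mulVec_smul, mulVec_add, mulVec_smul, nsq_add_smul, hb]; ring
  have hpos : ∀ t : ℝ, 0 < 1 + t ^ 2 * nsq w := by
    intro t
    have := nsq_nonneg' w
    positivity
  have hmin' : ∀ t : ℝ, nsq ((A - θ • 1).mulVec (V.mulVec s)) / nsq s * (1 + t ^ 2 * nsq w)
      ≤ nsq ((A - θ • 1).mulVec (V.mulVec y))
        - 2 * t * nsq ((A - θ • 1).mulVec (V.mulVec w))
        + t ^ 2 * nsq ((A - θ • 1).mulVec (V.mulVec w)) := by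
    intro t
    have h0 : y + (t : ℂ) • w ≠ 0 := by
      intro h
      have h1 := hN t
      rw [h] at h1
      have h2 := hpos t
      simp [nsq] at h1
      simp only [nsq] at h2
      linarith
    have h := hmin 1 (t : ℂ)
    rw [one_smul] at h
    have h3 := h h0
    rw [hN t, hR t, le_div_iff₀ (hpos t)] at h3
    exact h3
  have hEq : nsq ((A - θ • 1).mulVec (V.mulVec s)) / nsq s * (1 + τ ^ 2 * nsq w)
      = nsq ((A - θ • 1).mulVec (V.mulVec y))
        - 2 * τ * nsq ((A - θ • 1).mulVec (V.mulVec w))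
        + τ ^ 2 * nsq ((A - θ • 1).mulVec (V.mulVec w)) := by
    rw [hs, hN τ, hR τ, div_mul_cancel₀ _ (hpos τ).ne']
  clear hR hmin
  generalize nsq ((A - θ • 1).mulVec (V.mulVec s)) / nsq s = l at *
  generalize nsq ((A - θ • 1).mulVec (V.mulVec y)) = r at *
  generalize nsq ((A - θ • 1).mulVec (V.mulVec w)) = a at *
  generalize nsq w = o at *
  have hd : discrim (a - l * o) (-2 * a + 2 * τ * (a - l * o)) 0 ≤ 0 := by
    apply discrim_le_zero
    intro h
    have := hmin' (τ + h)
    linarith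
  have hc : -2 * a + 2 * τ * (a - l * o) = 0 := by
    unfold discrim at hd
    have : (-2 * a + 2 * τ * (a - l * o)) ^ 2 = 0 := le_antisymm (by linarith) (sq_nonneg _)
    exact pow_eq_zero_iff (two_ne_zero) |>.mp this
  linear_combination hEq + τ / 2 * hc
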